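/- For each i ∈ {1,2,3,4}, lim_{L→∞} P_{unif,L}(σ_L = i) = 1/4; that is, under the uniform law on prudent paths of length L, the law of the quadrant index σ_L converges to the uniform distribution on {1,2,3,4}. -/

import Mathlib

open Filter Set

/-- One admissible step of a nearest-neighbour walk on `ℤ²`. -/
def IsStep (s : ℤ × ℤ) : Prop :=
  s = (1, 0) ∨ s = (-1, 0) ∨ s = (0, 1) ∨ s = (0, -1)

/-- The set `Ω_L` of prudent paths of length `L`. -/
def prudentSet (L : ℕ) : Set (Fin (L + 1) → ℤ × ℤ) :=
  {π | π 0 = (0, 0) ∧ ∀ i : Fin L,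
    IsStep (π i.succ - π i.castSucc) ∧
    ∀ k : ℕ, 1 ≤ k → ∀ j : Fin (L + 1), j ≤ i.castSucc →
      π i.castSucc + (k : ℤ) • (π i.succ - π i.castSucc) ≠ π j}

/-- The uniform probability of a set `A` of paths under `P_{unif,L}`. -/
noncomputable def probUnif (L : ℕ) (A : Set (Fin (L + 1) → ℤ × ℤ)) : ℝ :=
  (Nat.card ↥(A ∩ prudentSet L) : ℝ) / (Nat.card ↥(prudentSet L) : ℝ)

/-- Coercion `ℤ² → ℝ²`. -/
def toR (p : ℤ × ℤ) : ℝ × ℝ := ((p.1 : ℝ), (p.2 : ℝ))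

/-- The rescaled interpolated path `π̃^L : [0,1] → ℝ²`. -/
noncomputable def rescaled (L : ℕ) (π : Fin (L + 1) → ℤ × ℤ) (t : ℝ) : ℝ × ℝ :=
  let n : ℕ := ⌊t * L⌋₊
  let p : ℝ × ℝ := toR (π ⟨min n L, by omega⟩)
  let q : ℝ × ℝ := toR (π ⟨min (n + 1) L, by omega⟩)
  (L : ℝ)⁻¹ • (p + (t * L - (n : ℝ)) • (q - p))

/-- Euclidean norm on `ℝ²`. -/
noncomputable def enorm2 (v : ℝ × ℝ) : ℝ := Real.sqrt (v.1 ^ 2 + v.2 ^ 2)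

/-- The four diagonal directions. -/
def evec : ℕ → ℝ × ℝ
  | 1 => (1, 1)
  | 2 => (-1, 1)
  | 3 => (-1, -1)
  | 4 => (1, -1)
  | _ => (0, 0)
/-- The quadrant index `σ_L(π)` of the endpoint of a prudent path: `i` if the endpoint lies
in the open `i`-th quadrant, `0` if it lies on one of the coordinate axes. -/
def sigmaIdx (L : ℕ) (π : Fin (L + 1) → ℤ × ℤ) : ℕ :=
  let p := π (Fin.last L)
  if 0 < p.1 ∧ 0 < p.2 then 1
  else if p.1 < 0 ∧ 0 < p.2 then 2
  else if p.1 < 0 ∧ p.2 < 0 then 3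
  else if 0 < p.1 ∧ p.2 < 0 then 4
  else 0

namespace PW

/-- The four lattice directions. -/
inductive Dir
  | E | N | W | S

instance : DecidableEq Dir := fun a b => by
  cases a <;> cases b <;> first | exact isTrue rfl | exact isFalse (fun h => nomatch h)

instance : Fintype Dir := ⟨{Dir.E, Dir.N, Dir.W, Dir.S}, fun d => by cases d <;> simp⟩

open Dir

/-- Unit vector of a direction. -/
def vec : Dir → ℤ × ℤ
  | E => (1, 0)
  | N => (0, 1)
  | W => (-1, 0)
  | S => (0, -1)

/-- Opposite direction. -/
def opp : Dir → Dir
  | E => W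
  | N => S
  | W => E
  | S => N

/-- End point of a word (most recent step first). -/
def pos : List Dir → ℤ × ℤ
  | [] => (0, 0)
  | d :: w => pos w + vec d

/-- List of visited sites. -/
def vis : List Dir → List (ℤ × ℤ)
  | [] => [(0, 0)]
  | d :: w => pos (d :: w) :: vis w

/-- The ray from the end point in direction `d` is free. -/
def Free : Dir → List Dir → Prop
  | E, w => ∀ p ∈ vis w, p.2 = (pos w).2 → p.1 ≤ (pos w).1
  | W, w => ∀ p ∈ vis w, p.2 = (pos w).2 → (pos w).1 ≤ p.1
  | N, w => ∀ p ∈ vis w, p.1 = (pos w).1 → p.2 ≤ (pos w).2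
  | S, w => ∀ p ∈ vis w, p.1 = (pos w).1 → (pos w).2 ≤ p.2

/-- Prudent words. -/
def Pr : List Dir → Prop
  | [] => True
  | d :: w => Pr w ∧ Free d w

/-- The end point lies on the `d`-side of the bounding box. -/
def On : Dir → List Dir → Prop
  | E, w => ∀ p ∈ vis w, p.1 ≤ (pos w).1
  | W, w => ∀ p ∈ vis w, (pos w).1 ≤ p.1
  | N, w => ∀ p ∈ vis w, p.2 ≤ (pos w).2
  | S, w => ∀ p ∈ vis w, (pos w).2 ≤ p.2

/-- The end point is a corner of the bounding box. -/
def Corner (w : List Dir) : Prop := (On E w ∨ On W w) ∧ (On N w ∨ On S w)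

lemma pos_mem_vis (w : List Dir) : pos w ∈ vis w := by
  cases w <;> simp [vis, pos]

lemma zero_mem_vis (w : List Dir) : ((0 : ℤ), (0 : ℤ)) ∈ vis w := by
  induction w with
  | nil => simp [vis]
  | cons d w ih => simp [vis, ih]

lemma pos_cons_fst (d : Dir) (w : List Dir) : (pos (d :: w)).1 = (pos w).1 + (vec d).1 := rfl
lemma pos_cons_snd (d : Dir) (w : List Dir) : (pos (d :: w)).2 = (pos w).2 + (vec d).2 := rfl

lemma pos_not_mem {d : Dir} {w : List Dir} (h : Free d w) : pos (d :: w) ∉ vis w := by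
  intro hm
  cases d <;> have := h _ hm <;> simp [pos, vec] at this

lemma vis_nodup {w : List Dir} (h : Pr w) : (vis w).Nodup := by
  induction w with
  | nil => simp [vis]
  | cons d w ih => exact List.nodup_cons.2 ⟨pos_not_mem h.2, ih h.1⟩

lemma vis_length (w : List Dir) : (vis w).length = w.length + 1 := by
  induction w with
  | nil => simp [vis]
  | cons d w ih => simp [vis, ih]

/-- Discrete intermediate value property of the second coordinate. -/
lemma ivt_snd (w : List Dir) (y : ℤ) (p q : ℤ × ℤ) (hp : p ∈ vis w) (hq : q ∈ vis w)
    (h1 : p.2 ≤ y) (h2 : y ≤ q.2) : ∃ r ∈ vis w, r.2 = y := by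
  induction w generalizing p q with
  | nil =>
    simp only [vis, List.mem_singleton] at hp hq
    subst hp; subst hq
    exact ⟨_, by simp [vis], le_antisymm h1 h2⟩
  | cons d w ih =>
    by_contra! hc
    have hc' : ∀ r ∈ vis w, r.2 ≠ y := fun r hr => hc r (by simp [vis, hr])
    have h0 := hc _ (pos_mem_vis _)
    have h3 := hc' _ (pos_mem_vis _)
    have key : ∀ r ∈ vis w, ¬ (r.2 ≤ y ∧ y ≤ (pos w).2) ∧ ¬ (y ≤ r.2 ∧ (pos w).2 ≤ y) := by
      intro r hr
      refine ⟨fun h => ?_, fun h => ?_⟩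
      · obtain ⟨s, hs, hs'⟩ := ih r (pos w) hr (pos_mem_vis _) h.1 h.2
        exact hc' s hs hs'
      · obtain ⟨s, hs, hs'⟩ := ih (pos w) r (pos_mem_vis _) hr h.2 h.1
        exact hc' s hs hs'
    have hstep : (pos (d :: w)).2 = (pos w).2 + (vec d).2 := rfl
    have hv : -1 ≤ (vec d).2 ∧ (vec d).2 ≤ 1 := by cases d <;> simp [vec]
    simp only [vis, List.mem_cons] at hp hq
    rcases hp with rfl | hp <;> rcases hq with rfl | hq
    · omega
    · have := key q hq; omega
    · have := key p hp; omega
    · obtain ⟨s, hs, hs'⟩ := ih p q hp hq h1 h2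
      exact hc' s hs hs'

/-- Discrete intermediate value property of the first coordinate. -/
lemma ivt_fst (w : List Dir) (y : ℤ) (p q : ℤ × ℤ) (hp : p ∈ vis w) (hq : q ∈ vis w)
    (h1 : p.1 ≤ y) (h2 : y ≤ q.1) : ∃ r ∈ vis w, r.1 = y := by
  induction w generalizing p q with
  | nil =>
    simp only [vis, List.mem_singleton] at hp hq
    subst hp; subst hq
    exact ⟨_, by simp [vis], le_antisymm h1 h2⟩
  | cons d w ih =>
    by_contra! hc
    have hc' : ∀ r ∈ vis w, r.1 ≠ y := fun r hr => hc r (by simp [vis, hr])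
    have h0 := hc _ (pos_mem_vis _)
    have h3 := hc' _ (pos_mem_vis _)
    have key : ∀ r ∈ vis w, ¬ (r.1 ≤ y ∧ y ≤ (pos w).1) ∧ ¬ (y ≤ r.1 ∧ (pos w).1 ≤ y) := by
      intro r hr
      refine ⟨fun h => ?_, fun h => ?_⟩
      · obtain ⟨s, hs, hs'⟩ := ih r (pos w) hr (pos_mem_vis _) h.1 h.2
        exact hc' s hs hs'
      · obtain ⟨s, hs, hs'⟩ := ih (pos w) r (pos_mem_vis _) hr h.2 h.1
        exact hc' s hs hs'
    have hstep : (pos (d :: w)).1 = (pos w).1 + (vec d).1 := rfl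
    have hv : -1 ≤ (vec d).1 ∧ (vec d).1 ≤ 1 := by cases d <;> simp [vec]
    simp only [vis, List.mem_cons] at hp hq
    rcases hp with rfl | hp <;> rcases hq with rfl | hq
    · omega
    · have := key q hq; omega
    · have := key p hp; omega
    · obtain ⟨s, hs, hs'⟩ := ih p q hp hq h1 h2
      exact hc' s hs hs'

/-- If the walk is neither on the top nor on the bottom side, its row was visited earlier. -/
lemma row_visited {w : List Dir} (h : Pr w) (hN : ¬ On N w) (hS : ¬ On S w) :
    ∃ r ∈ vis w, r.2 = (pos w).2 ∧ r.1 ≠ (pos w).1 := by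
  cases w with
  | nil => exact absurd (by simp [On, vis, pos]) hN
  | cons d w =>
    simp only [On, not_forall] at hN hS
    obtain ⟨p, hp, hp'⟩ := hN
    obtain ⟨q, hq, hq'⟩ := hS
    simp only [vis, List.mem_cons] at hp hq
    have hp2 : p ∈ vis w := by
      rcases hp with rfl | hp
      · exact absurd le_rfl hp'
      · exact hp
    have hq2 : q ∈ vis w := by
      rcases hq with rfl | hq
      · exact absurd le_rfl hq'
      · exact hq
    obtain ⟨r, hr, hr'⟩ := ivt_snd w (pos (d :: w)).2 q p hq2 hp2 (by omega) (by omega)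
    refine ⟨r, by simp [vis, hr], hr', fun hx => ?_⟩
    exact pos_not_mem h.2 ((Prod.ext hx hr' : r = pos (d :: w)) ▸ hr)

lemma col_visited {w : List Dir} (h : Pr w) (hE : ¬ On E w) (hW : ¬ On W w) :
    ∃ r ∈ vis w, r.1 = (pos w).1 ∧ r.2 ≠ (pos w).2 := by
  cases w with
  | nil => exact absurd (by simp [On, vis, pos]) hE
  | cons d w =>
    simp only [On, not_forall] at hE hW
    obtain ⟨p, hp, hp'⟩ := hE
    obtain ⟨q, hq, hq'⟩ := hW
    simp only [vis, List.mem_cons] at hp hq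
    have hp2 : p ∈ vis w := by
      rcases hp with rfl | hp
      · exact absurd le_rfl hp'
      · exact hp
    have hq2 : q ∈ vis w := by
      rcases hq with rfl | hq
      · exact absurd le_rfl hq'
      · exact hq
    obtain ⟨r, hr, hr'⟩ := ivt_fst w (pos (d :: w)).1 q p hq2 hp2 (by omega) (by omega)
    refine ⟨r, by simp [vis, hr], hr', fun hx => ?_⟩
    exact pos_not_mem h.2 ((Prod.ext hr' hx : r = pos (d :: w)) ▸ hr)

/-- A step away from a side is only possible at a corner. -/
lemma away {d : Dir} {w : List Dir} (h : Pr (d :: w)) (ho : On (opp d) w) : Corner w := by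
  obtain ⟨h1, h2⟩ := h
  cases d
  · refine ⟨Or.inr ho, ?_⟩
    by_contra! hc
    obtain ⟨r, hr, h3, h4⟩ := row_visited h1 hc.1 hc.2
    have := h2 r hr h3; have := ho r hr; omega
  · refine ⟨?_, Or.inr ho⟩
    by_contra! hc
    obtain ⟨r, hr, h3, h4⟩ := col_visited h1 hc.1 hc.2
    have := h2 r hr h3; have := ho r hr; omega
  · refine ⟨Or.inl ho, ?_⟩
    by_contra! hc
    obtain ⟨r, hr, h3, h4⟩ := row_visited h1 hc.1 hc.2
    have := h2 r hr h3; have := ho r hr; omega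
  · refine ⟨?_, Or.inl ho⟩
    by_contra! hc
    obtain ⟨r, hr, h3, h4⟩ := col_visited h1 hc.1 hc.2
    have := h2 r hr h3; have := ho r hr; omega

lemma on_step {d e : Dir} {w : List Dir} (ho : On d w) (he : e ≠ opp d) : On d (e :: w) := by
  cases d <;> cases e <;> simp [opp] at he <;> intro p hp <;>
    simp only [vis, List.mem_cons] at hp <;> rcases hp with rfl | hp <;> try exact le_rfl
  all_goals
    have := ho p hp
    rw [show pos (_ :: w) = pos w + vec _ from rfl]
    simp [vec]
    try omega

lemma exists_on {w : List Dir} (h : Pr w) : ∃ d, On d w := by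
  induction w with
  | nil => exact ⟨E, by simp [On, vis, pos]⟩
  | cons e w ih =>
    obtain ⟨d, hd⟩ := ih h.1
    by_cases he : e = opp d
    · have hoo : opp e = d := by subst he; cases d <;> rfl
      have hc := away h (hoo ▸ hd)
      have : ∃ d', On d' w ∧ e ≠ opp d' := by
        rcases hc with ⟨h1 | h1, h2 | h2⟩ <;> cases e
        all_goals first
          | (refine ⟨_, h1, ?_⟩; simp [opp]; done)
          | (refine ⟨_, h2, ?_⟩; simp [opp]; done)
      obtain ⟨d', h1, h2⟩ := this
      exact ⟨d', on_step h1 h2⟩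
    · exact ⟨d, on_step hd he⟩

/-- No immediate reversal. -/
lemma no_rev {d e : Dir} {w : List Dir} (h : Pr (d :: e :: w)) : d ≠ opp e := by
  have h2 := h.2
  have hm : pos w ∈ vis (e :: w) := by simp [vis, pos_mem_vis]
  intro hde
  subst hde
  cases e <;> have := h2 _ hm <;> simp [pos, vec] at this

lemma pr_append_right {v u : List Dir} (h : Pr (v ++ u)) : Pr u := by
  induction v with
  | nil => exact h
  | cons d v ih => exact ih h.1

/-- Number of maximal runs of the letter `X`. -/
def runs (X : Dir) : List Dir → ℕ
  | [] => 0
  | d :: v => runs X v + if d = X ∧ v.head? ≠ some X then 1 else 0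

/-- First corner decomposition. -/
lemma corner_decomp {w : List Dir} (h : Pr w) :
    ∃ v u, w = v ++ u ∧ Corner u ∧ (v = [] ∨ ∃ d, On d w ∧ runs (opp d) v ≤ 1) := by
  induction w with
  | nil => exact ⟨[], [], rfl, by simp [Corner, On, vis, pos], Or.inl rfl⟩
  | cons e w ih =>
    obtain ⟨v, u, rfl, hc, hv⟩ := ih h.1
    by_cases hcw : Corner (v ++ u)
    · obtain ⟨d, hd⟩ := exists_on h
      refine ⟨[e], v ++ u, rfl, hcw, Or.inr ⟨d, hd, ?_⟩⟩
      simp only [runs]; split_ifs <;> simp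
    · rcases hv with rfl | ⟨d, hd, hr⟩
      · exact absurd hc hcw
      · have he : e ≠ opp d := by
          rintro rfl
          apply hcw
          apply away h
          convert hd using 1
          cases d <;> rfl
        exact ⟨e :: v, u, rfl, hc, Or.inr ⟨d, on_step hd he, by simp [runs, he, hr]⟩⟩

/-- Decomposition at the last time satisfying `Q` (where `Q` contains `On W`). -/
lemma west_decomp (Q : List Dir → Prop) (R : List Dir → ℕ → Prop)
    (hQ : ∀ w, On W w → Q w)
    (hC : ∀ e w, Pr (e :: w) → Q w → ¬ Q (e :: w) → Corner w)
    (hR0 : ∀ w, R w 0) (hRm : ∀ e w n, R w n → R (e :: w) n)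
    (hRr : ∀ e w n, R w n → ¬ Q w → (e = N ∧ On N w ∨ e = S ∧ On S w) → R (e :: w) (n + 1))
    {w : List Dir} (h : Pr w) :
    Q w ∨ ∃ v u, w = v ++ u ∧ Q u ∧ Corner u ∧ ∃ n, R w n ∧ v ≠ [] ∧ 
      (runs W v ≤ n ∨ v.head? = some W ∧ runs W v ≤ n + 1) := by
  induction w with
  | nil => exact Or.inl (hQ _ (by simp [On, vis, pos]))
  | cons e w ih =>
    by_cases hQe : Q (e :: w)
    · exact Or.inl hQe
    right
    by_cases hQw : Q w
    · refine ⟨[e], w, rfl, hQw, hC e w h hQw hQe, 0, hR0 _, by simp, ?_⟩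
      by_cases heW : e = W
      · right; simp [runs, heW]
      · left; simp [runs, heW]
    rcases ih h.1 with h1 | ⟨v, u, rfl, hu, hc, n, hn, hv, hr⟩
    · exact absurd h1 hQw
    cases v with
    | nil => exact absurd rfl hv
    | cons a v =>
    by_cases heW : e = W
    · subst heW
      refine ⟨W :: a :: v, u, rfl, hu, hc, n, hRm _ _ _ hn, by simp, Or.inr ⟨rfl, ?_⟩⟩
      rw [runs]
      by_cases haW : a = W
      · simp [haW]; subst haW; rcases hr with hr | hr
        · omega
        · exact hr.2
      · simp [haW] at hr ⊢; omega
    · by_cases haW : a = W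
      · subst haW
        refine ⟨e :: W :: v, u, rfl, hu, hc, n + 1, ?_, by simp, Or.inl ?_⟩
        · apply hRr _ _ _ hn hQw
          have hnr := no_rev (w := v ++ u) h
          have hnE : ¬ On E (W :: (v ++ u)) := by
            intro hE
            have := hE (pos (v ++ u)) (by simp [vis, pos_mem_vis])
            simp [pos, vec] at this
          have hnW : ¬ On W (W :: (v ++ u)) := fun hW => hQw (hQ _ hW)
          have hnc : ¬ Corner (W :: (v ++ u)) := fun hcc => hcc.1.elim hnE hnW
          obtain ⟨d, hd⟩ := exists_on h.1
          have hed : e ≠ opp d := by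
            rintro rfl
            apply hnc
            apply away h
            convert hd using 1
            cases d <;> rfl
          cases d
          · exact absurd hd hnE
          · cases e
            · simp [opp] at hnr
            · exact Or.inl ⟨rfl, hd⟩
            · simp at heW
            · simp [opp] at hed
          · exact absurd hd hnW
          · cases e
            · simp [opp] at hnr
            · simp [opp] at hed
            · simp at heW
            · exact Or.inr ⟨rfl, hd⟩
        · rw [runs]; simp [heW]; rcases hr with hr | hr
          · omega
          · exact hr.2
      · refine ⟨e :: a :: v, u, rfl, hu, hc, n, hRm _ _ _ hn, by simp, Or.inl ?_⟩
        rw [runs]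
        simp [heW, haW] at hr ⊢; omega

lemma vis_append {v u : List Dir} {p : ℤ × ℤ} (hp : p ∈ vis (v ++ u)) :
    p ∈ vis u ∨ (|p.1 - (pos u).1| ≤ v.length ∧ |p.2 - (pos u).2| ≤ v.length) := by
  have hpos : ∀ v : List Dir, |(pos (v ++ u)).1 - (pos u).1| ≤ v.length ∧
      |(pos (v ++ u)).2 - (pos u).2| ≤ v.length := by
    intro v
    induction v with
    | nil => simp
    | cons d v ih =>
      simp only [List.cons_append, pos_cons_fst, pos_cons_snd, List.length_cons, Nat.cast_add,
        Nat.cast_one, abs_le] at ih ⊢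
      cases d <;> simp only [vec] <;> omega
  induction v with
  | nil => exact Or.inl hp
  | cons d v ih =>
    simp only [List.cons_append, vis, List.mem_cons] at hp
    rcases hp with rfl | hp
    · exact Or.inr (hpos (d :: v))
    · rcases ih hp with h | h
      · exact Or.inl h
      · right; simp only [List.length_cons, Nat.cast_add, Nat.cast_one]; omega

lemma pos_append (v u : List Dir) :
    |(pos (v ++ u)).1 - (pos u).1| ≤ v.length ∧ |(pos (v ++ u)).2 - (pos u).2| ≤ v.length := by
  induction v with
  | nil => simp
  | cons d v ih =>
    simp only [List.cons_append, pos_cons_fst, pos_cons_snd, List.length_cons, Nat.cast_add,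
      Nat.cast_one, abs_le] at ih ⊢
    cases d <;> simp only [vec] <;> omega

/-- Reflection in the vertical axis. -/
def rx : Dir → Dir
  | E => W
  | N => N
  | W => E
  | S => S

/-- Reflection in the diagonal. -/
def sw : Dir → Dir
  | E => N
  | N => E
  | W => S
  | S => W

lemma rx_rx (d : Dir) : rx (rx d) = d := by cases d <;> rfl
lemma sw_sw (d : Dir) : sw (sw d) = d := by cases d <;> rfl

lemma map_rx_rx (w : List Dir) : (w.map rx).map rx = w := by
  rw [List.map_map]; convert List.map_id w using 2; funext d; exact rx_rx d
lemma map_sw_sw (w : List Dir) : (w.map sw).map sw = w := by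
  rw [List.map_map]; convert List.map_id w using 2; funext d; exact sw_sw d

lemma pos_rx (w : List Dir) : pos (w.map rx) = (-(pos w).1, (pos w).2) := by
  induction w with
  | nil => simp [pos]
  | cons d w ih => 
    rw [List.map_cons, pos, ih, pos]
    cases d <;> simp [rx, vec] <;> omega

lemma pos_sw (w : List Dir) : pos (w.map sw) = ((pos w).2, (pos w).1) := by
  induction w with
  | nil => simp [pos]
  | cons d w ih => 
    rw [List.map_cons, pos, ih, pos]
    cases d <;> simp [sw, vec]

lemma vis_rx (w : List Dir) : vis (w.map rx) = (vis w).map (fun p => (-p.1, p.2)) := by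
  induction w with
  | nil => simp [vis]
  | cons d w ih =>
    rw [List.map_cons, vis, ih, vis, ← List.map_cons, pos_rx, List.map_cons]

lemma vis_sw (w : List Dir) : vis (w.map sw) = (vis w).map (fun p => (p.2, p.1)) := by
  induction w with
  | nil => simp [vis]
  | cons d w ih =>
    rw [List.map_cons, vis, ih, vis, ← List.map_cons, pos_sw, List.map_cons]

lemma free_rx (d : Dir) (w : List Dir) : Free (rx d) (w.map rx) ↔ Free d w := by
  cases d <;> simp only [Free, rx, vis_rx, pos_rx, List.forall_mem_map, neg_le_neg_iff, neg_inj]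

lemma free_sw (d : Dir) (w : List Dir) : Free (sw d) (w.map sw) ↔ Free d w := by
  cases d <;> simp only [Free, sw, vis_sw, pos_sw, List.forall_mem_map]

lemma on_rx (d : Dir) (w : List Dir) : On (rx d) (w.map rx) ↔ On d w := by
  cases d <;> simp only [On, rx, vis_rx, pos_rx, List.forall_mem_map, neg_le_neg_iff]

lemma on_sw (d : Dir) (w : List Dir) : On (sw d) (w.map sw) ↔ On d w := by
  cases d <;> simp only [On, sw, vis_sw, pos_sw, List.forall_mem_map]

lemma pr_rx (w : List Dir) : Pr (w.map rx) ↔ Pr w := by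
  induction w with
  | nil => simp [Pr]
  | cons d w ih => simp only [List.map_cons, Pr, ih, free_rx]

lemma pr_sw (w : List Dir) : Pr (w.map sw) ↔ Pr w := by
  induction w with
  | nil => simp [Pr]
  | cons d w ih => simp only [List.map_cons, Pr, ih, free_sw]

/-- Words of length `n`. -/
noncomputable def Wd (n : ℕ) : Finset (List Dir) := (List.finite_length_eq Dir n).toFinset

lemma mem_Wd {n : ℕ} {w : List Dir} : w ∈ Wd n ↔ w.length = n := by simp [Wd]

open Classical in
/-- Number of words of length `n` with a property. -/
noncomputable def cw (n : ℕ) (A : List Dir → Prop) : ℕ := ((Wd n).filter A).card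

lemma cw_mono {n : ℕ} {A B : List Dir → Prop} (h : ∀ w, w.length = n → A w → B w) :
    cw n A ≤ cw n B := by
  classical
  apply Finset.card_le_card
  intro w
  simp only [Finset.mem_filter, mem_Wd]
  exact fun h' => ⟨h'.1, h w h'.1 h'.2⟩

lemma cw_congr {n : ℕ} {A B : List Dir → Prop} (h : ∀ w, w.length = n → (A w ↔ B w)) :
    cw n A = cw n B :=
  le_antisymm (cw_mono fun w hw => (h w hw).1) (cw_mono fun w hw => (h w hw).2)

lemma cw_or {n : ℕ} (A B : List Dir → Prop) :
    cw n (fun w => A w ∨ B w) ≤ cw n A + cw n B := by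
  classical
  unfold cw
  refine le_trans (Finset.card_le_card ?_) (Finset.card_union_le _ _)
  intro w
  simp only [Finset.mem_filter, Finset.mem_union]
  tauto

lemma cw_zero (A : List Dir → Prop) : cw 0 A ≤ 1 := by
  classical
  unfold cw
  rw [Finset.card_le_one]
  simp only [Finset.mem_filter, mem_Wd, List.length_eq_zero_iff]
  rintro a ⟨rfl, _⟩ b ⟨rfl, _⟩
  rfl

lemma cw_zero_pos {A : List Dir → Prop} (h : A []) : 1 ≤ cw 0 A := by
  classical
  unfold cw
  rw [Nat.one_le_iff_ne_zero, Finset.card_ne_zero]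
  exact ⟨[], by simp [mem_Wd, h]⟩

/-- Splitting according to the first (most recent) letter. -/
lemma cw_succ (n : ℕ) (A : List Dir → Prop) :
    cw (n + 1) A = ∑ d : Dir, cw n (fun v => A (d :: v)) := by
  classical
  unfold cw
  rw [Finset.card_eq_sum_card_fiberwise (f := fun w : List Dir => w.headD E)
    (t := Finset.univ) (fun _ _ => Finset.mem_coe.2 (Finset.mem_univ _))]
  refine Finset.sum_congr rfl fun d _ => ?_
  symm
  apply Finset.card_bij (fun v _ => d :: v)
  · intro v hv
    simp only [Finset.mem_filter, mem_Wd] at hv ⊢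
    simp [hv.1, hv.2]
  · intro a _ b _ hab
    simpa using hab
  · intro w hw
    simp only [Finset.mem_filter, mem_Wd] at hw
    cases w with
    | nil => simp at hw
    | cons a v =>
      simp at hw
      obtain ⟨⟨h1, h2⟩, rfl⟩ := hw
      exact ⟨v, by simp [mem_Wd, h1, h2], rfl⟩

/-- Splitting according to the last (oldest) letter. -/
lemma cw_succ' (n : ℕ) (A : List Dir → Prop) :
    cw (n + 1) A = ∑ d : Dir, cw n (fun v => A (v ++ [d])) := by
  induction n generalizing A with
  | zero => 
    rw [cw_succ]
    refine Finset.sum_congr rfl fun d _ => cw_congr fun w hw => ?_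
    rw [List.length_eq_zero_iff] at hw
    subst hw; rfl
  | succ n ih =>
    rw [cw_succ]
    simp_rw [fun d => cw_succ n (fun v => A (v ++ [d]))]
    rw [Finset.sum_comm]
    refine Finset.sum_congr rfl fun d _ => ?_
    rw [ih]
    rfl

lemma cw_map (f : Dir → Dir) (hf : ∀ d, f (f d) = d) (n : ℕ) (A : List Dir → Prop) :
    cw n (fun w => A (w.map f)) = cw n A := by
  classical
  have hff : ∀ w : List Dir, (w.map f).map f = w := by
    intro w
    rw [List.map_map]; convert List.map_id w using 2; funext d; exact hf d
  unfold cw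
  apply Finset.card_bij (fun w _ => w.map f)
  · intro w hw
    simpa [mem_Wd] using hw
  · intro a _ b _ hab
    rw [← hff a, hab, hff]
  · intro w hw
    refine ⟨w.map f, ?_, hff w⟩
    simp only [Finset.mem_filter, mem_Wd] at hw ⊢
    rw [hff]
    simpa using hw

/-- Number of prudent extensions of `u` by `m` steps. -/
noncomputable def ext (u : List Dir) (m : ℕ) : ℕ := cw m (fun v => Pr (v ++ u))

/-- Number of prudent words. -/
noncomputable def Z (n : ℕ) : ℕ := cw n Pr

lemma ext_succ (u : List Dir) (m : ℕ) : ext u (m + 1) = ∑ d : Dir, ext (d :: u) m := by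
  unfold ext
  rw [cw_succ']
  simp

lemma ext_succ4 (u : List Dir) (m : ℕ) :
    ext u (m + 1) = ext (E :: u) m + ext (N :: u) m + ext (W :: u) m + ext (S :: u) m := by
  rw [ext_succ, show (Finset.univ : Finset Dir) = {E, N, W, S} from rfl]
  simp [add_assoc]

lemma ext_sw (u : List Dir) (m : ℕ) : ext (u.map sw) m = ext u m := by
  unfold ext
  rw [← cw_map sw sw_sw]
  simp_rw [← List.map_append, pr_sw]

lemma ext_rx (u : List Dir) (m : ℕ) : ext (u.map rx) m = ext u m := by
  unfold ext
  rw [← cw_map rx rx_rx]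
  simp_rw [← List.map_append, pr_rx]

/-- Fibering over the last part of the word. -/
lemma cw_append (n m : ℕ) (A : List Dir → List Dir → Prop) :
    cw (m + n) (fun w => A (w.take m) (w.drop m)) =
      ∑ u ∈ Wd n, cw m (fun v => A v u) := by
  classical
  unfold cw
  rw [Finset.card_eq_sum_card_fiberwise (f := fun w : List Dir => w.drop m) (t := Wd n)]
  · refine Finset.sum_congr rfl fun u hu => ?_
    symm
    apply Finset.card_bij (fun v _ => v ++ u)
    · intro v hv
      simp only [Finset.mem_filter, mem_Wd] at hv hu ⊢
      obtain ⟨rfl, h2⟩ := hv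
      simp [hu, h2]
    · intro a _ b _ hab
      exact List.append_cancel_right hab
    · intro w hw
      simp only [Finset.mem_filter, mem_Wd] at hw
      obtain ⟨⟨h1, h2⟩, rfl⟩ := hw
      refine ⟨w.take m, ?_, List.take_append_drop m w⟩
      simp only [Finset.mem_filter, mem_Wd]
      exact ⟨by simp; omega, h2⟩
  · intro w hw
    simp only [Finset.coe_filter, Set.mem_ofPred_eq, mem_Wd] at hw
    simp only [Finset.mem_coe, mem_Wd, List.length_drop]
    omega

lemma Z_add (n m : ℕ) : Z (m + n) = ∑ u ∈ Wd n, ext u m := by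
  unfold Z ext
  rw [← cw_append n m (fun v u => Pr (v ++ u))]
  simp

lemma free_again {d : Dir} {w : List Dir} (h : Free d w) : Free d (d :: w) := by
  cases d <;> intro p hp <;> simp only [vis, List.mem_cons] at hp <;>
    rcases hp with rfl | hp <;> simp only [pos_cons_fst, pos_cons_snd, vec, le_refl, implies_true] <;>
    have := h p hp <;> omega

lemma ext_one_pos {u : List Dir} (h : Pr u) : 1 ≤ ext u 1 := by
  have key : ∃ d, Pr (d :: u) := by
    cases u with
    | nil => exact ⟨E, trivial, by simp [Free, vis, pos]⟩
    | cons d u => exact ⟨d, h, free_again h.2⟩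
  obtain ⟨d, hd⟩ := key
  rw [ext_succ]
  calc 1 ≤ ext (d :: u) 0 := cw_zero_pos hd
    _ ≤ _ := Finset.single_le_sum (f := fun d => ext (d :: u) 0) (fun _ _ => Nat.zero_le _)
      (Finset.mem_univ d)

lemma Z_le_succ (n : ℕ) : Z n ≤ Z (n + 1) := by
  classical
  rw [add_comm, Z_add]
  have : Z n = ∑ u ∈ Wd n, if Pr u then 1 else 0 := by
    rw [Finset.sum_boole]; simp [Z, cw]
  rw [this]
  apply Finset.sum_le_sum
  intro u _
  split_ifs with h
  · exact ext_one_pos h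
  · simp

lemma Z_pos (n : ℕ) : 0 < Z n := by
  induction n with
  | zero => exact cw_zero_pos trivial
  | succ n ih => exact lt_of_lt_of_le ih (Z_le_succ n)

/-- Words without immediate reversal. -/
def NR : List Dir → Prop
  | [] => True
  | d :: v => NR v ∧ v.head? ≠ some (opp d)

lemma nr_of_pr {v u : List Dir} (h : Pr (v ++ u)) : NR v := by
  induction v with
  | nil => trivial
  | cons d v ih =>
    refine ⟨ih h.1, ?_⟩
    cases v with
    | nil => simp
    | cons e v =>
      have := no_rev h
      simp only [List.head?_cons, ne_eq, Option.some.injEq]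
      rintro rfl
      apply this
      cases d <;> rfl

/-- Weights for the upper bound. -/
noncomputable def wt (X d : Dir) : ℝ := if d = X then 0.005 else if d = opp X then 1.41 else 1

lemma wt_pos (X d : Dir) : 0 < wt X d := by unfold wt; split_ifs <;> norm_num

lemma cw_false {n : ℕ} {A : List Dir → Prop} (h : ∀ w, ¬ A w) : cw n A = 0 := by
  classical
  unfold cw
  simp [h]

lemma runs_count_aux (X : Dir) (n : ℕ) : ∀ (d : Dir) (k : ℕ),
    (cw n (fun v => NR (d :: v) ∧ runs X (d :: v) ≤ k) : ℝ) ≤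
      200 * 300 ^ k * wt X d * 2.42 ^ n := by
  induction n with
  | zero =>
    intro d k
    have h1 : (cw 0 (fun v => NR (d :: v) ∧ runs X (d :: v) ≤ k) : ℝ) ≤ 1 := by
      exact_mod_cast cw_zero _
    have h2 : (1 : ℝ) ≤ 300 ^ k := one_le_pow₀ (by norm_num)
    have h3 : (0.005 : ℝ) ≤ wt X d := by unfold wt; split_ifs <;> norm_num
    nlinarith
  | succ n ih =>
    intro d k
    have hA : (0 : ℝ) < 200 * 300 ^ k * 2.42 ^ n := by positivity
    set C : ℝ := 200 * 300 ^ k * 2.42 ^ n with hC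
    have key : ∀ e, (cw n (fun v => NR (d :: e :: v) ∧ runs X (d :: e :: v) ≤ k) : ℝ) ≤
        C * (if e = opp d then 0 else if d = X ∧ e ≠ X then wt X e / 300 else wt X e) := by
      intro e
      split_ifs with h1 h2
      · rw [cw_false]
        · simp
        · rintro w ⟨⟨_, h⟩, _⟩
          simp [h1] at h
      · have hr : ∀ v, runs X (d :: e :: v) = runs X (e :: v) + 1 := by
          intro v
          rw [runs]; simp [h2.1, h2.2]
        cases k with
        | zero =>
          rw [cw_false]
          · have := wt_pos X e
            push_cast
            positivity
          · rintro w ⟨_, h⟩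
            rw [hr] at h
            omega
        | succ k =>
          calc (cw n (fun v => NR (d :: e :: v) ∧ runs X (d :: e :: v) ≤ k + 1) : ℝ)
              ≤ cw n (fun v => NR (e :: v) ∧ runs X (e :: v) ≤ k) := by
                refine Nat.cast_le.2 (cw_mono fun w _ h => ⟨h.1.1, ?_⟩)
                have := h.2
                rw [hr] at this
                omega
            _ ≤ _ := ih e k
            _ = _ := by rw [hC]; ring
      · calc (cw n (fun v => NR (d :: e :: v) ∧ runs X (d :: e :: v) ≤ k) : ℝ)
              ≤ cw n (fun v => NR (e :: v) ∧ runs X (e :: v) ≤ k) := by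
                refine Nat.cast_le.2 (cw_mono fun w _ h => ⟨h.1.1, ?_⟩)
                have := h.2
                rw [runs] at this
                omega
            _ ≤ _ := ih e k
            _ = _ := by rw [hC]; ring
    rw [cw_succ, Nat.cast_sum]
    refine (Finset.sum_le_sum fun e _ => key e).trans ?_
    rw [← Finset.mul_sum, show 200 * 300 ^ k * wt X d * 2.42 ^ (n + 1) = C * (wt X d * 2.42) by
      rw [hC]; ring]
    refine mul_le_mul_of_nonneg_left ?_ hA.le
    rw [show (Finset.univ : Finset Dir) = {E, N, W, S} from rfl]
    cases X <;> cases d <;> simp [wt, opp] <;> norm_num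

lemma runs_count (X : Dir) (n k : ℕ) :
    (cw n (fun v => NR v ∧ runs X v ≤ k) : ℝ) ≤ 1000 * 300 ^ k * 2.42 ^ n := by
  have h2 : (1 : ℝ) ≤ 300 ^ k := one_le_pow₀ (by norm_num)
  cases n with
  | zero =>
    have h1 : (cw 0 (fun v => NR v ∧ runs X v ≤ k) : ℝ) ≤ 1 := by
      exact_mod_cast cw_zero _
    nlinarith
  | succ n =>
    rw [cw_succ, Nat.cast_sum]
    refine (Finset.sum_le_sum fun e _ => runs_count_aux X n e k).trans ?_
    rw [show (Finset.univ : Finset Dir) = {E, N, W, S} from rfl]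
    have hA : (0 : ℝ) < 300 ^ k * 2.42 ^ n := by positivity
    cases X <;> simp [wt, opp, pow_succ] <;> nlinarith

/-- Weights for the lower bound. -/
noncomputable def fe : ℕ → ℝ
  | 0 => 1
  | 1 => 0.7722
  | 2 => 0.5553
  | 3 => 0.3463
  | _ => 0

noncomputable def fs : ℕ → ℝ
  | 1 => 0.4348
  | 2 => 0.2865
  | 3 => 0.1422
  | _ => 0

noncomputable def fn : ℕ → ℝ
  | 0 => 0.8214
  | 1 => 0.6545
  | 2 => 0.4969
  | _ => 0

/-- The walk is on the right side, at distance at most `i` from the top of its box. -/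
def St (i : ℕ) (w : List Dir) : Prop :=
  Pr w ∧ ∀ p ∈ vis w, p.1 ≤ (pos w).1 ∧ p.2 ≤ (pos w).2 + i

def CE (w : List Dir) : Prop := ∀ p ∈ vis w, p.1 = (pos w).1 → p.2 = (pos w).2

lemma CE.south {w : List Dir} (h : CE w) : Free S w := fun p hp h1 => (h p hp h1).ge
lemma CE.north {w : List Dir} (h : CE w) : Free N w := fun p hp h1 => (h p hp h1).le

lemma St.east {i : ℕ} {w : List Dir} (h : St i w) : St i (E :: w) ∧ CE (E :: w) := by
  refine ⟨⟨⟨h.1, fun p hp _ => (h.2 p hp).1⟩, ?_⟩, ?_⟩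
  · intro p hp
    simp only [vis, List.mem_cons] at hp
    rcases hp with rfl | hp
    · simp
    · have := h.2 p hp
      simp only [pos_cons_fst, pos_cons_snd, vec]; omega
  · intro p hp
    simp only [vis, List.mem_cons] at hp
    rcases hp with rfl | hp
    · simp
    · have := h.2 p hp
      simp only [pos_cons_fst, pos_cons_snd, vec]; omega

lemma St.north {i : ℕ} {w : List Dir} (h : St (i + 1) w) (hf : Free N w) :
    St i (N :: w) ∧ Free N (N :: w) := by
  refine ⟨⟨⟨h.1, hf⟩, ?_⟩, free_again hf⟩
  intro p hp
  simp only [vis, List.mem_cons] at hp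
  rcases hp with rfl | hp
  · simp
  · have := h.2 p hp
    simp only [pos_cons_fst, pos_cons_snd, vec]; omega

lemma St.south {i : ℕ} {w : List Dir} (h : St i w) (hf : Free S w) :
    St (i + 1) (S :: w) ∧ Free S (S :: w) := by
  refine ⟨⟨⟨h.1, hf⟩, ?_⟩, free_again hf⟩
  intro p hp
  simp only [vis, List.mem_cons] at hp
  rcases hp with rfl | hp
  · simp; omega
  · have := h.2 p hp
    simp only [pos_cons_fst, pos_cons_snd, vec]; omega

lemma St.swap {w : List Dir} (h : St 0 w) : St 0 (w.map sw) := by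
  refine ⟨(pr_sw w).2 h.1, ?_⟩
  rw [vis_sw, pos_sw, List.forall_mem_map]
  intro p hp
  have := h.2 p hp
  simp only
  omega

lemma ext_north_swap (w : List Dir) (m : ℕ) : ext (N :: w) m = ext (E :: w.map sw) m := by
  rw [← ext_sw]; rfl

lemma lower_aux (m : ℕ) : ∀ (i : ℕ) (w : List Dir), St i w →
    (CE w → fe i * 2.43 ^ m ≤ ext w m) ∧ (Free S w → fs i * 2.43 ^ m ≤ ext w m) ∧
    (Free N w → fn i * 2.43 ^ m ≤ ext w m) := by
  induction m with
  | zero =>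
    intro i w h
    have h1 : (1 : ℝ) ≤ ext w 0 := by exact_mod_cast (cw_zero_pos h.1 : 1 ≤ ext w 0)
    refine ⟨fun _ => ?_, fun _ => ?_, fun _ => ?_⟩
    · unfold fe; split <;> norm_num <;> first | linarith | exact_mod_cast h1
    · unfold fs; split <;> norm_num <;> first | linarith | exact_mod_cast h1
    · unfold fn; split <;> norm_num <;> first | linarith | exact_mod_cast h1
  | succ m ih =>
    intro i w h
    have hE : fe i * 2.43 ^ m ≤ (ext (E :: w) m : ℝ) := (ih i _ h.east.1).1 h.east.2
    have hg : (0 : ℝ) < 2.43 ^ m := by positivity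
    have hp : (2.43 : ℝ) ^ (m + 1) = 2.43 ^ m * 2.43 := pow_succ _ _
    rw [hp]
    clear hp
    generalize (2.43 : ℝ) ^ m = g at *
    have hW0 : (0 : ℝ) ≤ ext (W :: w) m := Nat.cast_nonneg _
    have hN0 : (0 : ℝ) ≤ ext (N :: w) m := Nat.cast_nonneg _
    have hS0 : (0 : ℝ) ≤ ext (S :: w) m := Nat.cast_nonneg _
    have hS : Free S w → fs (i + 1) * g ≤ (ext (S :: w) m : ℝ) := fun hf =>
      (ih _ _ (h.south hf).1).2.1 (h.south hf).2
    have hN : Free N w → (if i = 0 then fe 0 else fn (i - 1)) * g ≤ (ext (N :: w) m : ℝ) := by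
      intro hf
      cases i with
      | zero => 
        rw [ext_north_swap]
        exact (ih 0 _ h.swap.east.1).1 h.swap.east.2
      | succ i => exact (ih _ _ (h.north hf).1).2.2 (h.north hf).2
    rw [ext_succ4]
    push_cast
    refine ⟨fun hc => ?_, fun hc => ?_, fun hc => ?_⟩
    · have h1 := hS hc.south
      have h2 := hN hc.north
      rcases i with _ | _ | _ | _ | i <;> simp [fe, fs, fn] at hE h1 h2 ⊢ <;> nlinarith
    · have h1 := hS hc
      rcases i with _ | _ | _ | _ | i <;> simp [fe, fs, fn] at hE h1 ⊢ <;> nlinarith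
    · have h2 := hN hc
      rcases i with _ | _ | _ | _ | i <;> simp [fe, fs, fn] at hE h2 ⊢ <;> nlinarith

lemma lower_NE {w : List Dir} (h : Pr w) (hE : On E w) (hN : On N w) (m : ℕ) :
    0.5 * 2.43 ^ m ≤ (ext w m : ℝ) := by
  have := (lower_aux m 0 w ⟨h, fun p hp => ⟨hE p hp, by simpa using hN p hp⟩⟩).2.2
    (fun p hp _ => hN p hp)
  have hg : (0 : ℝ) < 2.43 ^ m := by positivity
  simp only [fn] at this
  nlinarith

lemma lower_N {w : List Dir} (h : Pr w) (hE : On E w ∨ On W w) (hN : On N w) (m : ℕ) :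
    0.5 * 2.43 ^ m ≤ (ext w m : ℝ) := by
  rcases hE with hE | hE
  · exact lower_NE h hE hN m
  · rw [← ext_rx]
    exact lower_NE ((pr_rx w).2 h) ((on_rx W w).2 hE) ((on_rx N w).2 hN) m

lemma lower_corner {w : List Dir} (h : Pr w) (hc : Corner w) (m : ℕ) :
    0.5 * 2.43 ^ m ≤ (ext w m : ℝ) := by
  obtain ⟨hE, hN | hN⟩ := hc
  · exact lower_N h hE hN m
  · rw [← ext_sw, ← ext_rx, ← ext_sw]
    apply lower_N
    · exact (pr_sw _).2 ((pr_rx _).2 ((pr_sw _).2 h))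
    · exact hE.imp (fun h => (on_sw N _).2 ((on_rx N _).2 ((on_sw E _).2 h)))
        (fun h => (on_sw S _).2 ((on_rx S _).2 ((on_sw W _).2 h)))
    · exact (on_sw E _).2 ((on_rx W _).2 ((on_sw S _).2 hN))

/-- Words whose part after some corner time is long and has few runs of some letter. -/
def BadP (k M : ℕ) (w : List Dir) : Prop :=
  ∃ v u, w = v ++ u ∧ M ≤ v.length ∧ Corner u ∧ ∃ X, runs X v ≤ k

lemma cw_exists {ι : Type*} (s : Finset ι) (n : ℕ) (A : ι → List Dir → Prop) :
    cw n (fun w => ∃ i ∈ s, A i w) ≤ ∑ i ∈ s, cw n (A i) := by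
  classical
  unfold cw
  refine le_trans (Finset.card_le_card ?_)
    (Finset.card_biUnion_le (s := s) (t := fun i => (Wd n).filter (A i)))
  intro w
  simp only [Finset.mem_filter, Finset.mem_biUnion]
  rintro ⟨h1, i, h2, h3⟩
  exact ⟨i, h2, h1, h3⟩

lemma bad_one (k m n : ℕ) (X : Dir) :
    (cw (m + n) (fun w => Pr w ∧ Corner (w.drop m) ∧ runs X (w.take m) ≤ k) : ℝ) ≤
      2000 * 300 ^ k * (242 / 243) ^ m * Z (m + n) := by
  have h := cw_append n m (fun v u => Pr (v ++ u) ∧ Corner u ∧ runs X v ≤ k)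
  simp only [List.take_append_drop] at h
  rw [h, Z_add, Nat.cast_sum, Nat.cast_sum, Finset.mul_sum]
  refine Finset.sum_le_sum fun u _ => ?_
  by_cases hu : Pr u ∧ Corner u
  · have h1 := lower_corner hu.1 hu.2 m
    have h2 : (cw m (fun v => Pr (v ++ u) ∧ Corner u ∧ runs X v ≤ k) : ℝ) ≤
        cw m (fun v => NR v ∧ runs X v ≤ k) :=
      Nat.cast_le.2 (cw_mono fun v _ hv => ⟨nr_of_pr hv.1, hv.2.2⟩)
    have h3 := runs_count X m k
    calc _ ≤ _ := h2
      _ ≤ _ := h3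
      _ = 2000 * 300 ^ k * (242 / 243) ^ m * (0.5 * 2.43 ^ m) := by
        rw [show (2.42 : ℝ) = (242 / 243) * 2.43 by norm_num, mul_pow]; ring
      _ ≤ _ := by gcongr
  · rw [cw_false]
    · simp only [Nat.cast_zero]; positivity
    · exact fun v hv => hu ⟨pr_append_right hv.1, hv.2.1⟩

lemma bad_count (k M L : ℕ) : (cw L (fun w => Pr w ∧ BadP k M w) : ℝ) ≤
    1944000 * 300 ^ k * (242 / 243) ^ M * Z L := by
  have h1 : cw L (fun w => Pr w ∧ BadP k M w) ≤
      ∑ m ∈ Finset.Ico M (L + 1), ∑ X : Dir,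
        cw L (fun w => Pr w ∧ Corner (w.drop m) ∧ runs X (w.take m) ≤ k) := by
    refine le_trans ?_ (Finset.sum_le_sum fun m _ => cw_exists Finset.univ L
      (fun X w => Pr w ∧ Corner (w.drop m) ∧ runs X (w.take m) ≤ k))
    refine le_trans ?_ (cw_exists (Finset.Ico M (L + 1)) L _)
    refine cw_mono ?_
    rintro w hw ⟨hp, v, u, rfl, hM, hc, X, hX⟩
    refine ⟨v.length, ?_, X, Finset.mem_univ _, hp, by simpa using hc, by simpa using hX⟩
    simp at hw ⊢
    omega
  have h2 : ∀ m ∈ Finset.Ico M (L + 1), ∀ X : Dir,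
      (cw L (fun w => Pr w ∧ Corner (w.drop m) ∧ runs X (w.take m) ≤ k) : ℝ) ≤
        2000 * 300 ^ k * (242 / 243) ^ m * Z L := by
    intro m hm X
    rw [Finset.mem_Ico] at hm
    obtain ⟨n, rfl⟩ := Nat.exists_eq_add_of_le (show m ≤ L by omega)
    exact bad_one k m n X
  have h3 : (cw L (fun w => Pr w ∧ BadP k M w) : ℝ) ≤
      ∑ m ∈ Finset.Ico M (L + 1), ∑ _X : Dir, 2000 * 300 ^ k * (242 / 243) ^ m * (Z L : ℝ) := by
    refine le_trans (Nat.cast_le.2 h1) ?_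
    push_cast
    exact Finset.sum_le_sum fun m hm => Finset.sum_le_sum fun X _ => h2 m hm X
  refine h3.trans ?_
  have h4 : ∑ m ∈ Finset.Ico M (L + 1), ((242 : ℝ) / 243) ^ m ≤ (242 / 243) ^ M / (1 - 242 / 243) :=
    geom_sum_Ico_le_of_lt_one (by norm_num) (by norm_num)
  have h5 : (Finset.univ : Finset Dir).card = 4 := rfl
  have h6 : ∑ m ∈ Finset.Ico M (L + 1), ∑ _X : Dir, 2000 * 300 ^ k * (242 / 243) ^ m * (Z L : ℝ)
      = (8000 * 300 ^ k * Z L) * ∑ m ∈ Finset.Ico M (L + 1), ((242 : ℝ) / 243) ^ m := by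
    rw [Finset.mul_sum]
    refine Finset.sum_congr rfl fun m _ => ?_
    rw [Finset.sum_const, h5, nsmul_eq_mul]
    push_cast; ring
  rw [h6]
  refine (mul_le_mul_of_nonneg_left h4 (by positivity)).trans (le_of_eq ?_)
  norm_num
  ring

/-- Negligible properties of prudent words. -/
def Neg (A : List Dir → Prop) : Prop :=
  ∀ ε : ℝ, 0 < ε → ∃ L₀ : ℕ, ∀ L ≥ L₀, (cw L (fun w => Pr w ∧ A w) : ℝ) ≤ ε * Z L

lemma neg_mono {A B : List Dir → Prop} (h : ∀ w, Pr w → A w → B w) (hB : Neg B) : Neg A := by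
  intro ε hε
  obtain ⟨L₀, h0⟩ := hB ε hε
  exact ⟨L₀, fun L hL => le_trans
    (Nat.cast_le.2 (cw_mono fun w _ hw => ⟨hw.1, h w hw.1 hw.2⟩)) (h0 L hL)⟩

lemma cw_pr_or (L : ℕ) (A B : List Dir → Prop) :
    (cw L (fun w => Pr w ∧ (A w ∨ B w)) : ℝ) ≤
      cw L (fun w => Pr w ∧ A w) + cw L (fun w => Pr w ∧ B w) := by
  rw [← Nat.cast_add]
  refine Nat.cast_le.2 (le_trans (cw_mono ?_) (cw_or _ _))
  intro w _ hw
  tauto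

lemma neg_or {A B : List Dir → Prop} (hA : Neg A) (hB : Neg B) : Neg (fun w => A w ∨ B w) := by
  intro ε hε
  obtain ⟨L₁, h1⟩ := hA (ε / 2) (by linarith)
  obtain ⟨L₂, h2⟩ := hB (ε / 2) (by linarith)
  refine ⟨max L₁ L₂, fun L hL => ?_⟩
  have := h1 L (le_trans (le_max_left _ _) hL)
  have := h2 L (le_trans (le_max_right _ _) hL)
  have := cw_pr_or L A B
  linarith

lemma neg_rx {A : List Dir → Prop} (hA : Neg A) : Neg (fun w => A (w.map rx)) := by
  intro ε hε
  obtain ⟨L₁, h1⟩ := hA ε hε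
  refine ⟨L₁, fun L hL => ?_⟩
  rw [← cw_map rx rx_rx]
  simp only [pr_rx, map_rx_rx]
  exact h1 L hL

lemma neg_sw {A : List Dir → Prop} (hA : Neg A) : Neg (fun w => A (w.map sw)) := by
  intro ε hε
  obtain ⟨L₁, h1⟩ := hA ε hε
  refine ⟨L₁, fun L hL => ?_⟩
  rw [← cw_map sw sw_sw]
  simp only [pr_sw, map_sw_sw]
  exact h1 L hL

lemma neg_cons {A : List Dir → Prop} (hA : Neg A) :
    Neg (fun w => ∃ d u, w = d :: u ∧ A u) := by
  intro ε hε
  obtain ⟨L₁, h1⟩ := hA (ε / 4) (by linarith)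
  refine ⟨L₁ + 1, fun L hL => ?_⟩
  obtain ⟨n, rfl⟩ := Nat.exists_eq_add_of_le' (show 1 ≤ L by omega)
  have h2 := h1 n (by omega)
  have h3 : (Z n : ℝ) ≤ Z (n + 1) := Nat.cast_le.2 (Z_le_succ n)
  rw [cw_succ, Nat.cast_sum]
  calc ∑ d : Dir, (cw n (fun v => Pr (d :: v) ∧ ∃ d' u, d :: v = d' :: u ∧ A u) : ℝ)
      ≤ ∑ _d : Dir, (cw n (fun v => Pr v ∧ A v) : ℝ) := by
        refine Finset.sum_le_sum fun d _ => Nat.cast_le.2 (cw_mono ?_)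
        rintro v _ ⟨hp, d', u, he, ha⟩
        cases he
        exact ⟨hp.1, ha⟩
    _ = 4 * cw n (fun v => Pr v ∧ A v) := by
        rw [Finset.sum_const, show (Finset.univ : Finset Dir).card = 4 from rfl, nsmul_eq_mul]
        norm_num
    _ ≤ _ := by nlinarith

lemma neg_ext {A : List Dir → Prop} (hA : Neg A) (M : ℕ) :
    Neg (fun w => ∃ v u, w = v ++ u ∧ v.length ≤ M ∧ A u) := by
  induction M with
  | zero =>
    refine neg_mono ?_ hA
    rintro w _ ⟨v, u, rfl, hv, ha⟩
    rw [Nat.le_zero, List.length_eq_zero_iff] at hv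
    subst hv
    exact ha
  | succ M ih =>
    refine neg_mono ?_ (neg_or hA (neg_cons ih))
    rintro w _ ⟨v, u, rfl, hv, ha⟩
    cases v with
    | nil => exact Or.inl ha
    | cons d v => exact Or.inr ⟨d, v ++ u, rfl, v, u, rfl, by simpa using hv, ha⟩

lemma neg_bad {A : List Dir → Prop} (k : ℕ)
    (h : ∀ M : ℕ, ∃ B, Neg B ∧ ∀ w, Pr w → A w → BadP k M w ∨ B w) : Neg A := by
  intro ε hε
  obtain ⟨M, hM⟩ := exists_pow_lt_of_lt_one
    (show (0 : ℝ) < ε / 2 / (1944000 * 300 ^ k) by positivity) (show (242 / 243 : ℝ) < 1 by norm_num)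
  rw [lt_div_iff₀ (by positivity)] at hM
  obtain ⟨B, hB, hAB⟩ := h M
  obtain ⟨L₁, h1⟩ := hB (ε / 2) (by linarith)
  refine ⟨L₁, fun L hL => ?_⟩
  have h2 := h1 L hL
  have h3 := bad_count k M L
  have h4 : (cw L (fun w => Pr w ∧ A w) : ℝ) ≤ cw L (fun w => Pr w ∧ (BadP k M w ∨ B w)) :=
    Nat.cast_le.2 (cw_mono fun w _ hw => ⟨hw.1, hAB w hw.1 hw.2⟩)
  have h5 := cw_pr_or L (BadP k M) B
  have h6 : 1944000 * 300 ^ k * (242 / 243) ^ M * (Z L : ℝ) ≤ ε / 2 * Z L := by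
    apply mul_le_mul_of_nonneg_right _ (Nat.cast_nonneg _)
    linarith
  linarith

lemma neg_short (K : ℕ) : Neg (fun w => w.length ≤ K) := by
  intro ε hε
  refine ⟨K + 1, fun L hL => ?_⟩
  have h : cw L (fun w => Pr w ∧ w.length ≤ K) ≤ cw L (fun _ => False) :=
    cw_mono fun w hw h => by omega
  rw [cw_false (A := fun _ => False) (fun _ h => h)] at h
  rw [Nat.le_zero.1 h]
  simp only [Nat.cast_zero]
  positivity

lemma box_length {w : List Dir} (h : Pr w) (a b : ℕ)
    (hb : ∀ p ∈ vis w, (pos w).1 - a ≤ p.1 ∧ p.1 ≤ (pos w).1 ∧ (pos w).2 - b ≤ p.2 ∧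
      p.2 ≤ (pos w).2) : w.length ≤ (a + 1) * (b + 1) := by
  have h1 : (vis w).toFinset ⊆ Finset.Icc ((pos w).1 - a) (pos w).1 ×ˢ
      Finset.Icc ((pos w).2 - b) (pos w).2 := by
    intro p hp
    have := hb p (List.mem_toFinset.1 hp)
    simp only [Finset.mem_product, Finset.mem_Icc]
    omega
  have h2 := Finset.card_le_card h1
  rw [List.toFinset_card_of_nodup (vis_nodup h), vis_length, Finset.card_product] at h2
  simp only [Int.card_Icc] at h2
  have h3 : ((pos w).1 + 1 - ((pos w).1 - a)).toNat = a + 1 := by omega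
  have h4 : ((pos w).2 + 1 - ((pos w).2 - b)).toNat = b + 1 := by omega
  rw [h3, h4] at h2
  omega

lemma neg_flatY (H : ℕ) :
    Neg (fun w => On E w ∧ On N w ∧ ∀ p ∈ vis w, (pos w).2 - H ≤ p.2) := by
  refine neg_bad (H + 1) fun M => ⟨_, neg_short ((2 * M + 1) * (H + 1)), ?_⟩
  rintro w hp ⟨hE, hN, hH⟩
  have key : ∀ v u, w = v ++ u → v.length ≤ M → On W u → w.length ≤ (2 * M + 1) * (H + 1) := by
    rintro v u rfl hv hW
    refine box_length hp (2 * M) H fun p hpv => ⟨?_, hE p hpv, hH p hpv, hN p hpv⟩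
    have h1 := (pos_append v u).1
    rw [abs_le] at h1
    push_cast
    rcases vis_append hpv with h2 | h2
    · have := hW p h2; omega
    · have := h2.1; rw [abs_le] at this; omega
  have D := fun hC hR0 hRm hRr => west_decomp (On W)
    (fun w n => ∃ p ∈ vis w, ∃ q ∈ vis w, (n : ℤ) ≤ p.2 - q.2) (fun _ h => h) hC hR0 hRm hRr hp
  suffices hs : _ ∧ _ ∧ _ ∧ _ by
    rcases D hs.1 hs.2.1 hs.2.2.1 hs.2.2.2 with h | ⟨v, u, rfl, hu, hc, n, ⟨p, hp1, q, hq1, hn⟩, -, hr⟩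
    · exact Or.inr (key [] w rfl (by simp) h)
    · by_cases hM : M ≤ v.length
      · left
        refine ⟨v, u, rfl, hM, hc, W, ?_⟩
        have := hN p hp1
        have := hH q hq1
        omega
      · exact Or.inr (key v u rfl (by omega) hu)
  refine ⟨?_, ?_, ?_, ?_⟩
  · intro e w h hw hnw
    by_cases he : e = E
    · subst he; exact away h hw
    · exact absurd (on_step hw he) hnw
  · intro w
    exact ⟨_, pos_mem_vis w, _, pos_mem_vis w, by simp⟩
  · rintro e w n ⟨p, hp1, q, hq1, hn⟩
    exact ⟨p, by simp [vis, hp1], q, by simp [vis, hq1], hn⟩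
  · rintro e w n ⟨p, hp1, q, hq1, hn⟩ - (⟨rfl, ho⟩ | ⟨rfl, ho⟩)
    · refine ⟨_, pos_mem_vis _, q, by simp [vis, hq1], ?_⟩
      have := ho p hp1
      rw [pos_cons_snd]; simp only [vec]; push_cast; omega
    · refine ⟨p, by simp [vis, hp1], _, pos_mem_vis _, ?_⟩
      have := ho q hq1
      rw [pos_cons_snd]; simp only [vec]; push_cast; omega

lemma neg_flatX (H : ℕ) :
    Neg (fun w => On E w ∧ On N w ∧ ∀ p ∈ vis w, (pos w).1 - H ≤ p.1) := by
  refine neg_mono ?_ (neg_sw (neg_flatY H))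
  rintro w - ⟨hE, hN, h⟩
  refine ⟨(on_sw N w).2 hN, (on_sw E w).2 hE, ?_⟩
  rw [vis_sw, pos_sw, List.forall_mem_map]
  exact h

lemma neg_top (M : ℕ) : Neg (fun w => On E w ∧ On N w ∧ (pos w).2 ≤ M) := by
  refine neg_bad (M + 1) fun K => ⟨_, neg_or (neg_flatX (2 * K)) (neg_flatY (2 * K)), ?_⟩
  rintro w hp ⟨hE, hN, hM⟩
  have key : ∀ v u, w = v ++ u → v.length ≤ K → (On W u ∨ On S u) →
      (On E w ∧ On N w ∧ ∀ p ∈ vis w, (pos w).1 - (2 * K : ℕ) ≤ p.1) ∨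
      (On E w ∧ On N w ∧ ∀ p ∈ vis w, (pos w).2 - (2 * K : ℕ) ≤ p.2) := by
    rintro v u rfl hv hW
    have h1 := pos_append v u
    rw [abs_le, abs_le] at h1
    push_cast
    refine hW.imp (fun hW => ⟨hE, hN, fun p hpv => ?_⟩) (fun hW => ⟨hE, hN, fun p hpv => ?_⟩)
    · rcases vis_append hpv with h2 | h2
      · have := hW p h2; omega
      · have := h2.1; rw [abs_le] at this; omega
    · rcases vis_append hpv with h2 | h2
      · have := hW p h2; omega
      · have := h2.2; rw [abs_le] at this; omega
  have D := fun hC hR0 hRm hRr => west_decomp (fun w => On W w ∨ On S w)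
    (fun w n => ∃ p ∈ vis w, (n : ℤ) ≤ p.2) (fun _ h => Or.inl h) hC hR0 hRm hRr hp
  suffices hs : _ ∧ _ ∧ _ ∧ _ by
    rcases D hs.1 hs.2.1 hs.2.2.1 hs.2.2.2 with h | ⟨v, u, rfl, hu, hc, n, ⟨p, hp1, hn⟩, -, hr⟩
    · exact Or.inr (key [] w rfl (by simp) h)
    · by_cases hMv : K ≤ v.length
      · left
        refine ⟨v, u, rfl, hMv, hc, W, ?_⟩
        have := hN p hp1
        omega
      · exact Or.inr (key v u rfl (by omega) hu)
  refine ⟨?_, ?_, ?_, ?_⟩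
  · rintro e w h (hw | hw) hnw
    · by_cases he : e = E
      · subst he; exact away h hw
      · exact absurd (Or.inl (on_step hw he)) hnw
    · by_cases he : e = N
      · subst he; exact away h hw
      · exact absurd (Or.inr (on_step hw he)) hnw
  · intro w
    exact ⟨_, zero_mem_vis w, by simp⟩
  · rintro e w n ⟨p, hp1, hn⟩
    exact ⟨p, by simp [vis, hp1], hn⟩
  · rintro e w n ⟨p, hp1, hn⟩ hnQ (⟨rfl, ho⟩ | ⟨rfl, ho⟩)
    · refine ⟨_, pos_mem_vis _, ?_⟩
      have := ho p hp1
      rw [pos_cons_snd]; simp only [vec]; push_cast; omega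
    · exact absurd (Or.inr ho) hnQ

lemma neg_top' (M : ℕ) : Neg (fun w => (On E w ∨ On W w) ∧ On N w ∧ (pos w).2 ≤ M) := by
  refine neg_mono ?_ (neg_or (neg_top M) (neg_rx (neg_top M)))
  rintro w - ⟨hE | hE, hN, h⟩
  · exact Or.inl ⟨hE, hN, h⟩
  · refine Or.inr ⟨(on_rx W w).2 hE, (on_rx N w).2 hN, ?_⟩
    rw [pos_rx]; exact h

lemma neg_corner (M : ℕ) : Neg (fun w => Corner w ∧ |(pos w).2| ≤ M) := by
  refine neg_mono ?_ (neg_or (neg_top' M) (neg_sw (neg_rx (neg_sw (neg_top' M)))))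
  rintro w - ⟨⟨hE, hN | hN⟩, h⟩
  · exact Or.inl ⟨hE, hN, (abs_le.1 h).2⟩
  · refine Or.inr ⟨?_, ?_, ?_⟩
    · exact hE.imp (fun h => (on_sw N _).2 ((on_rx N _).2 ((on_sw E _).2 h)))
        (fun h => (on_sw S _).2 ((on_rx S _).2 ((on_sw W _).2 h)))
    · exact (on_sw E _).2 ((on_rx W _).2 ((on_sw S _).2 hN))
    · rw [pos_sw, pos_rx, pos_sw]
      have := (abs_le.1 h).1
      simp only
      omega

lemma neg_axisY : Neg (fun w => (pos w).2 = 0) := by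
  refine neg_bad 1 fun M => ⟨_, neg_ext (neg_corner M) M, ?_⟩
  intro w hp h0
  obtain ⟨v, u, rfl, hc, hv⟩ := corner_decomp hp
  by_cases hM : M ≤ v.length
  · left
    refine ⟨v, u, rfl, hM, hc, ?_⟩
    rcases hv with rfl | ⟨d, _, hd⟩
    · exact ⟨E, by simp [runs]⟩
    · exact ⟨_, hd⟩
  · right
    refine ⟨v, u, rfl, by omega, hc, ?_⟩
    have := (pos_append v u).2
    rw [h0, abs_le] at this
    rw [abs_le]
    omega

lemma neg_axis : Neg (fun w => (pos w).1 = 0 ∨ (pos w).2 = 0) := by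
  refine neg_or (neg_mono ?_ (neg_sw neg_axisY)) neg_axisY
  intro w _ h
  rw [pos_sw]; exact h

/-- Number of prudent words ending in the quadrant with the given signs. -/
noncomputable def quad (L : ℕ) (a b : ℤ) : ℕ :=
  cw L (fun w => Pr w ∧ 0 < a * (pos w).1 ∧ 0 < b * (pos w).2)

lemma quad_neg_left (L : ℕ) (a b : ℤ) : quad L (-a) b = quad L a b := by
  unfold quad
  rw [← cw_map rx rx_rx]
  simp only [pr_rx, pos_rx, neg_mul_neg]

lemma quad_swap (L : ℕ) (a b : ℤ) : quad L b a = quad L a b := by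
  unfold quad
  rw [← cw_map sw sw_sw]
  simp only [pr_sw, pos_sw, and_comm]

lemma cw_split (n : ℕ) (A B : List Dir → Prop) :
    cw n A = cw n (fun w => A w ∧ B w) + cw n (fun w => A w ∧ ¬ B w) := by
  classical
  unfold cw
  rw [← Finset.card_filter_add_card_filter_not (s := (Wd n).filter A) B,
    Finset.filter_filter, Finset.filter_filter]
  congr!

lemma Z_quad (L : ℕ) :
    Z L = 4 * quad L 1 1 + cw L (fun w => Pr w ∧ ((pos w).1 = 0 ∨ (pos w).2 = 0)) := by
  have h2 : quad L (-1) 1 = quad L 1 1 := quad_neg_left L 1 1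
  have h4 : quad L 1 (-1) = quad L 1 1 := by rw [quad_swap, h2]
  have h3 : quad L (-1) (-1) = quad L 1 1 := by rw [quad_neg_left, h4]
  have e1 : Z L = _ := cw_split L Pr (fun w => (pos w).1 = 0 ∨ (pos w).2 = 0)
  have e2 := cw_split L (fun w => Pr w ∧ ¬ ((pos w).1 = 0 ∨ (pos w).2 = 0))
    (fun w => 0 < (pos w).1)
  have e3 := cw_split L (fun w => (Pr w ∧ ¬ ((pos w).1 = 0 ∨ (pos w).2 = 0)) ∧ 0 < (pos w).1)
    (fun w => 0 < (pos w).2)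
  have e4 := cw_split L (fun w => (Pr w ∧ ¬ ((pos w).1 = 0 ∨ (pos w).2 = 0)) ∧ ¬ 0 < (pos w).1)
    (fun w => 0 < (pos w).2)
  have f1 : cw L (fun w => ((Pr w ∧ ¬ ((pos w).1 = 0 ∨ (pos w).2 = 0)) ∧ 0 < (pos w).1) ∧
      0 < (pos w).2) = quad L 1 1 := by
    refine cw_congr fun w _ => ?_
    by_cases hp : Pr w <;> simp only [hp, true_and, false_and]
    omega
  have f2 : cw L (fun w => ((Pr w ∧ ¬ ((pos w).1 = 0 ∨ (pos w).2 = 0)) ∧ 0 < (pos w).1) ∧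
      ¬ 0 < (pos w).2) = quad L 1 (-1) := by
    refine cw_congr fun w _ => ?_
    by_cases hp : Pr w <;> simp only [hp, true_and, false_and]
    omega
  have f3 : cw L (fun w => ((Pr w ∧ ¬ ((pos w).1 = 0 ∨ (pos w).2 = 0)) ∧ ¬ 0 < (pos w).1) ∧
      0 < (pos w).2) = quad L (-1) 1 := by
    refine cw_congr fun w _ => ?_
    by_cases hp : Pr w <;> simp only [hp, true_and, false_and]
    omega
  have f4 : cw L (fun w => ((Pr w ∧ ¬ ((pos w).1 = 0 ∨ (pos w).2 = 0)) ∧ ¬ 0 < (pos w).1) ∧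
      ¬ 0 < (pos w).2) = quad L (-1) (-1) := by
    refine cw_congr fun w _ => ?_
    by_cases hp : Pr w <;> simp only [hp, true_and, false_and]
    omega
  omega

open Filter in
lemma quad_tendsto :
    Tendsto (fun L : ℕ => (quad L 1 1 : ℝ) / Z L) atTop (nhds (1 / 4)) := by
  rw [Metric.tendsto_atTop]
  intro ε hε
  obtain ⟨L₀, h⟩ := neg_axis ε hε
  refine ⟨L₀, fun L hL => ?_⟩
  have h1 := h L hL
  have hZ : (0 : ℝ) < Z L := Nat.cast_pos.2 (Z_pos L)
  have h2 : (Z L : ℝ) = 4 * quad L 1 1 +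
      cw L (fun w => Pr w ∧ ((pos w).1 = 0 ∨ (pos w).2 = 0)) := by exact_mod_cast Z_quad L
  have h3 : (0 : ℝ) ≤ cw L (fun w => Pr w ∧ ((pos w).1 = 0 ∨ (pos w).2 = 0)) := Nat.cast_nonneg _
  rw [Real.dist_eq, abs_lt]
  constructor
  · rw [lt_sub_iff_add_lt, lt_div_iff₀ hZ]
    nlinarith
  · rw [sub_lt_iff_lt_add, div_lt_iff₀ hZ]
    nlinarith

/-- The path of a word. -/
def path (L : ℕ) (w : List Dir) : Fin (L + 1) → ℤ × ℤ := fun i => pos (w.drop (L - i))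

lemma path_last (L : ℕ) (w : List Dir) : path L w (Fin.last L) = pos w := by
  simp [path]

lemma path_cons {L : ℕ} (d : Dir) {w : List Dir} :
    path (L + 1) (d :: w) = Fin.snoc (α := fun _ => ℤ × ℤ) (path L w) (pos (d :: w)) := by
  funext i
  refine Fin.lastCases ?_ (fun i => ?_) i
  · rw [path_last, Fin.snoc_last]
  · rw [Fin.snoc_castSucc]
    have h : L + 1 - (i.castSucc : ℕ) = (L - i) + 1 := by
      have := i.is_lt
      rw [Fin.val_castSucc]; omega
    simp only [path, h, List.drop_succ_cons]

lemma mem_vis_iff {L : ℕ} {w : List Dir} (hw : w.length = L) (p : ℤ × ℤ) :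
    p ∈ vis w ↔ ∃ j, path L w j = p := by
  induction w generalizing L with
  | nil =>
    subst hw
    simp only [vis, List.mem_singleton, path, List.drop_nil, pos]
    exact ⟨fun h => ⟨0, h.symm⟩, fun ⟨_, h⟩ => h.symm⟩
  | cons d w ih =>
    subst hw
    rw [List.length_cons, path_cons]
    simp only [vis, List.mem_cons, ih rfl]
    constructor
    · rintro (rfl | ⟨j, rfl⟩)
      · exact ⟨Fin.last _, by simp⟩
      · exact ⟨j.castSucc, by simp⟩
    · rintro ⟨j, rfl⟩
      refine Fin.lastCases ?_ (fun i => ?_) j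
      · left; simp
      · right; exact ⟨i, by simp⟩

lemma prudent_snoc {L : ℕ} (π : Fin (L + 1) → ℤ × ℤ) (q : ℤ × ℤ) :
    Fin.snoc (α := fun _ => ℤ × ℤ) π q ∈ prudentSet (L + 1) ↔
      π ∈ prudentSet L ∧ IsStep (q - π (Fin.last L)) ∧
      ∀ k : ℕ, 1 ≤ k → ∀ j, π (Fin.last L) + (k : ℤ) • (q - π (Fin.last L)) ≠ π j := by
  have h0 : Fin.snoc (α := fun _ => ℤ × ℤ) π q 0 = π 0 := by
    rw [← Fin.castSucc_zero, Fin.snoc_castSucc]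
  simp only [prudentSet, Set.mem_ofPred_eq, h0, Fin.forall_fin_succ' (n := L),
    Fin.forall_fin_succ' (n := L + 1), Fin.succ_castSucc, Fin.snoc_castSucc, Fin.succ_last,
    Fin.snoc_last, Fin.castSucc_le_castSucc_iff]
  have e : ∀ i : Fin (L + 1), ¬ Fin.last (L + 1) ≤ i.castSucc := fun i => by
    simp [Fin.le_def]; try omega
  simp only [e, false_imp_iff, and_true, Fin.le_last, true_imp_iff, and_assoc]

lemma isStep_iff (s : ℤ × ℤ) : IsStep s ↔ ∃ d, s = vec d := by
  constructor
  · rintro (h | h | h | h)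
    · exact ⟨E, h⟩
    · exact ⟨W, h⟩
    · exact ⟨N, h⟩
    · exact ⟨S, h⟩
  · rintro ⟨d, rfl⟩
    cases d <;> simp [IsStep, vec]

lemma free_iff (d : Dir) (w : List Dir) :
    Free d w ↔ ∀ k : ℕ, 1 ≤ k → ∀ p ∈ vis w, pos w + (k : ℤ) • vec d ≠ p := by
  constructor
  · rintro h k hk p hp rfl
    cases d <;> have := h _ hp <;> simp [vec] at this <;> omega
  · intro h
    cases d <;> intro p hp he <;> by_contra hc <;> push Not at hc
    · refine h (p.1 - (pos w).1).toNat (by omega) p hp ?_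
      ext <;> simp [vec] <;> omega
    · refine h (p.2 - (pos w).2).toNat (by omega) p hp ?_
      ext <;> simp [vec] <;> omega
    · refine h ((pos w).1 - p.1).toNat (by omega) p hp ?_
      ext <;> simp [vec] <;> omega
    · refine h ((pos w).2 - p.2).toNat (by omega) p hp ?_
      ext <;> simp [vec] <;> omega

lemma vec_inj {d e : Dir} (h : vec d = vec e) : d = e := by
  cases d <;> cases e <;> simp [vec] at h ⊢

lemma path_mem {L : ℕ} {w : List Dir} (hw : w.length = L) : path L w ∈ prudentSet L ↔ Pr w := by
  induction w generalizing L with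
  | nil =>
    subst hw
    simp only [prudentSet, Pr, iff_true]
    exact ⟨rfl, fun i => i.elim0⟩
  | cons d w ih =>
    subst hw
    rw [List.length_cons, path_cons, prudent_snoc, ih rfl, path_last]
    have h1 : pos (d :: w) - pos w = vec d := by simp [pos]
    rw [h1, isStep_iff]
    simp only [Pr, free_iff, mem_vis_iff rfl]
    constructor
    · rintro ⟨h, -, h'⟩
      refine ⟨h, ?_⟩
      rintro k hk p ⟨j, rfl⟩
      exact h' k hk j
    · rintro ⟨h, h'⟩
      exact ⟨h, ⟨d, rfl⟩, fun k hk j => h' k hk _ ⟨j, rfl⟩⟩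

lemma path_inj {L : ℕ} {w w' : List Dir} (hw : w.length = L) (hw' : w'.length = L)
    (h : path L w = path L w') : w = w' := by
  induction w generalizing L w' with
  | nil =>
    subst hw
    exact (List.length_eq_zero_iff.1 hw').symm
  | cons d w ih =>
    subst hw
    rcases w' with _ | ⟨d', w'⟩
    · simp at hw'
    rw [List.length_cons, path_cons, path_cons] at h
    have h1 : path w.length w = path w.length w' := by
      funext j
      have := congrFun h j.castSucc
      simpa using this
    have h2 : pos (d :: w) = pos (d' :: w') := by
      have := congrFun h (Fin.last _)
      simpa using this
    have h3 : w = w' := ih rfl (by simpa using hw') h1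
    subst h3
    have : vec d = vec d' := by simpa [pos] using h2
    rw [vec_inj this]

lemma path_surj {L : ℕ} {π : Fin (L + 1) → ℤ × ℤ} (h : π ∈ prudentSet L) :
    ∃ w : List Dir, w.length = L ∧ path L w = π := by
  induction L with
  | zero =>
    refine ⟨[], rfl, ?_⟩
    funext i
    rw [Fin.fin_one_eq_zero i]
    refine Eq.trans ?_ h.1.symm
    rfl
  | succ L ih =>
    rw [← Fin.snoc_init_self π, prudent_snoc] at h
    obtain ⟨h1, h2, -⟩ := h
    obtain ⟨w, hw, he⟩ := ih h1
    rw [← he, path_last] at h2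
    obtain ⟨d, hd⟩ := (isStep_iff _).1 h2
    refine ⟨d :: w, by simp [hw], ?_⟩
    rw [path_cons, he]
    have : pos (d :: w) = π (Fin.last (L + 1)) := by
      rw [pos, ← hd]; abel
    rw [this]
    exact Fin.snoc_init_self π

lemma card_paths (L : ℕ) (A : Set (Fin (L + 1) → ℤ × ℤ)) :
    Nat.card ↥(A ∩ prudentSet L) = cw L (fun w => Pr w ∧ path L w ∈ A) := by
  classical
  have h : A ∩ prudentSet L =
      Set.image (path L) (((Wd L).filter (fun w => Pr w ∧ path L w ∈ A) : Finset (List Dir)) :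
        Set (List Dir)) := by
    apply Set.Subset.antisymm
    · rintro π ⟨hA, hP⟩
      obtain ⟨w, hw, rfl⟩ := path_surj hP
      refine ⟨w, ?_, rfl⟩
      simp only [Finset.coe_filter, Set.mem_ofPred_eq, mem_Wd]
      exact ⟨hw, (path_mem hw).1 hP, hA⟩
    · rintro _ ⟨w, hw, rfl⟩
      simp only [Finset.coe_filter, Set.mem_ofPred_eq, mem_Wd] at hw
      exact ⟨hw.2.2, (path_mem hw.1).2 hw.2.1⟩
  rw [h, Nat.card_image_of_injOn]
  · rw [Nat.card_coe_set_eq, Set.ncard_coe_finset]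
    unfold cw
    congr!
  · intro w hw w' hw' he
    simp only [Finset.coe_filter, Set.mem_ofPred_eq, mem_Wd] at hw hw'
    exact path_inj hw.1 hw'.1 he

lemma card_all (L : ℕ) : Nat.card ↥(prudentSet L) = Z L := by
  have := card_paths L Set.univ
  rw [Set.univ_inter] at this
  rw [this]
  exact cw_congr fun w _ => by simp

lemma prob_eq (L : ℕ) (i : ℕ) (a b : ℤ)
    (h : ∀ w : List Dir, sigmaIdx L (path L w) = i ↔ 0 < a * (pos w).1 ∧ 0 < b * (pos w).2)
    (hq : quad L a b = quad L 1 1) :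
    probUnif L {π | sigmaIdx L π = i} = (quad L 1 1 : ℝ) / Z L := by
  rw [probUnif, card_paths, card_all, ← hq]
  congr 2
  exact cw_congr fun w _ => by rw [Set.mem_ofPred_eq, h]
end PW

/-- Under the uniform law on prudent paths of length `L`, the law of the quadrant index
`σ_L` converges to the uniform distribution on `{1,2,3,4}`. -/
theorem sigma_uniform_limit :
    ∀ i ∈ Finset.Icc 1 4,
      Tendsto (fun L : ℕ => probUnif L {π | sigmaIdx L π = i}) atTop (nhds (1 / 4)) := by
  
  intro i hi
  refine PW.quad_tendsto.congr fun L => Eq.symm ?_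
  have h2 : PW.quad L (-1) 1 = PW.quad L 1 1 := PW.quad_neg_left L 1 1
  have h4 : PW.quad L 1 (-1) = PW.quad L 1 1 := by rw [PW.quad_swap, h2]
  have h3 : PW.quad L (-1) (-1) = PW.quad L 1 1 := by rw [PW.quad_neg_left, h4]
  rw [Finset.mem_Icc] at hi
  obtain ⟨hl, hr⟩ := hi
  interval_cases i
  · refine PW.prob_eq L 1 1 1 (fun w => ?_) rfl
    simp only [sigmaIdx, PW.path_last]
    obtain ⟨x, y⟩ := PW.pos w
    dsimp only
    split_ifs <;> simp <;> omega
  · refine PW.prob_eq L 2 (-1) 1 (fun w => ?_) h2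
    simp only [sigmaIdx, PW.path_last]
    obtain ⟨x, y⟩ := PW.pos w
    dsimp only
    split_ifs <;> simp <;> omega
  · refine PW.prob_eq L 3 (-1) (-1) (fun w => ?_) h3
    simp only [sigmaIdx, PW.path_last]
    obtain ⟨x, y⟩ := PW.pos w
    dsimp only
    split_ifs <;> simp <;> omega
  · refine PW.prob_eq L 4 1 (-1) (fun w => ?_) h4
    simp only [sigmaIdx, PW.path_last]
    obtain ⟨x, y⟩ := PW.pos w
    dsimp only
    split_ifs <;> simp <;> omega
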